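/- For all nonnegative integers a and b, one has Θ₊^a Θ₋^b = Σ_{k=0}^{min(a,b)} ( (a)_k (b)_k / k! ) (2τ²)^k Θ₋^{b−k} Θ₊^{a−k} in ⋀V ⊗ End(P), where (z)_k := z(z−1)⋯(z−k+1) denotes the descending factorial. -/

import Mathlib

open Matrix MvPolynomial TensorProduct

noncomputable section

/-- Index set for entries `x_{i,j}` with `i < j`. -/
abbrev Idx (n : ℕ) := {p : Fin n × Fin n // p.1 < p.2}

/-- Polynomial algebra on the space of alternating `n × n` matrices. -/
abbrev P (n : ℕ) := MvPolynomial (Idx n) ℂ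

/-- Multiplication operator `M_{i,j}` (with `M_{j,i} = -M_{i,j}`, `M_{i,i} = 0`). -/
def Mop (n : ℕ) (i j : Fin n) : Module.End ℂ (P n) :=
  if h : i < j then LinearMap.mulLeft ℂ (X ⟨(i, j), h⟩)
  else if h' : j < i then -LinearMap.mulLeft ℂ (X ⟨(j, i), h'⟩ : P n)
  else 0

/-- Derivation `D_{i,j} = ∂/∂x_{i,j}` (with `D_{j,i} = -D_{i,j}`, `D_{i,i} = 0`). -/
def Dop (n : ℕ) (i j : Fin n) : Module.End ℂ (P n) :=
  if h : i < j then ((pderiv ⟨(i, j), h⟩ : Derivation ℂ (P n) (P n)) : P n →ₗ[ℂ] P n)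
  else if h' : j < i then -((pderiv ⟨(j, i), h'⟩ : Derivation ℂ (P n) (P n)) : P n →ₗ[ℂ] P n)
  else 0

/-- `2n`-dimensional vector space with basis indexed by `Fin n ⊕ Fin n`
(`Sum.inl i ↦ e_{i+1}`, `Sum.inr i ↦ e_{-(i+1)}`). -/
abbrev V (n : ℕ) := (Fin n ⊕ Fin n) → ℂ

/-- The tensor product algebra `⋀V ⊗ End(P)`. -/
abbrev ExtEnd (n : ℕ) := ExteriorAlgebra ℂ (V n) ⊗[ℂ] Module.End ℂ (P n)

/-- The basis vectors `e_i` in the exterior algebra. -/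
def e (n : ℕ) (v : Fin n ⊕ Fin n) : ExteriorAlgebra ℂ (V n) :=
  ExteriorAlgebra.ι ℂ (Pi.single v 1)

/-- `τ = Σ_i e_i e_{−i} ⊗ 1`. -/
def tau (n : ℕ) : ExtEnd n := ∑ i : Fin n, (e n (.inl i) * e n (.inr i)) ⊗ₜ[ℂ] 1

/-- `Θ₋ = Σ_{i,j} e_i e_j ⊗ M_{i,j}`. -/
def ThetaMinus (n : ℕ) : ExtEnd n :=
  ∑ i : Fin n, ∑ j : Fin n, (e n (.inl i) * e n (.inl j)) ⊗ₜ[ℂ] Mop n i j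

/-- `Θ₊ = Σ_{i,j} e_{−j} e_{−i} ⊗ D_{i,j}`. -/
def ThetaPlus (n : ℕ) : ExtEnd n :=
  ∑ i : Fin n, ∑ j : Fin n, (e n (.inr j) * e n (.inr i)) ⊗ₜ[ℂ] Dop n i j

/-- Descending factorial `(a)_k = a(a−1)⋯(a−k+1)` as a complex number. -/
def dfac (a k : ℕ) : ℂ := ∏ t ∈ Finset.range k, ((a : ℂ) - t)

/-! The product of two vectors is central in `⋀V`, so all commutators in `⋀V ⊗ End(P)` between the
summands of `Θ₊` and those of `Θ₋` come from the Heisenberg relations `[∂_p, x_q] = δ_{p,q}`.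
Summing over pairs `i < j` gives `[Θ₊, Θ₋] = 2τ²`, which is central. The formula is then the normal
ordering of `x ^ a * y ^ b` when `[x, y]` commutes with `x` and `y`: by the binomial theorem for
the commuting operators `ad x` and right multiplication by `x`, whose sum is left multiplication
by `x`, it reduces to `(ad x)^k (y^b) = (b)_k [x, y]^k y^(b-k)`. -/

section Commutators

attribute [local instance] LieRing.ofAssociativeRing

section Ring

variable {A : Type*} [Ring A]

theorem pow_mul_eq_sum_ad_pow_mul (R : Type*) [CommRing R] [Algebra R A] (x z : A) (a : ℕ) :
    x ^ a * z = ∑ k ∈ Finset.range (a + 1),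
      a.choose k • ((LieAlgebra.ad R A x ^ k) z * x ^ (a - k)) := by
  have hsum : LinearMap.mulLeft R x = LieAlgebra.ad R A x + LinearMap.mulRight R x := by
    simp [LieAlgebra.ad_eq_lmul_left_sub_lmul_right]
  have hcomm : Commute (LinearMap.mulRight R x) (LieAlgebra.ad R A x) := by
    rw [LieAlgebra.ad_eq_lmul_left_sub_lmul_right]
    exact (LinearMap.commute_mulLeft_right x x).symm.sub_right (Commute.refl _)
  have hbinom : LinearMap.mulLeft R x ^ a = ∑ k ∈ Finset.range (a + 1),
      a.choose k • (LinearMap.mulRight R x ^ (a - k) * LieAlgebra.ad R A x ^ k) := by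
    rw [hsum, hcomm.symm.add_pow', Finset.Nat.sum_antidiagonal_eq_sum_range_succ_mk]
    exact Finset.sum_congr rfl fun k _ => by rw [(hcomm.pow_pow (a - k) k).eq]
  calc x ^ a * z = (LinearMap.mulLeft R x ^ a) z := by
        rw [LinearMap.pow_mulLeft, LinearMap.mulLeft_apply]
    _ = _ := by simp [hbinom, LinearMap.pow_mulRight]

theorem lie_pow_of_commute {x y : A} (hy : Commute ⁅x, y⁆ y) (b : ℕ) :
    ⁅x, y ^ b⁆ = b • (⁅x, y⁆ * y ^ (b - 1)) := by
  induction b with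
  | zero => simp [Ring.lie_def]
  | succ b ih =>
    have leibniz : ⁅x, y * y ^ b⁆ = ⁅x, y⁆ * y ^ b + y * ⁅x, y ^ b⁆ := by
      simp only [Ring.lie_def]; noncomm_ring
    rw [pow_succ', leibniz, ih, add_smul, one_smul, add_tsub_cancel_right, mul_smul_comm,
      ← mul_assoc, ← hy.eq, mul_assoc, add_comm]
    rcases b with _ | b
    · simp
    · rw [add_tsub_cancel_right, pow_succ']

theorem ad_pow_apply_pow (R : Type*) [CommRing R] [Algebra R A] {x y : A}
    (hx : Commute ⁅x, y⁆ x) (hy : Commute ⁅x, y⁆ y) (k b : ℕ) :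
    (LieAlgebra.ad R A x ^ k) (y ^ b) = b.descFactorial k • (⁅x, y⁆ ^ k * y ^ (b - k)) := by
  induction k with
  | zero => simp
  | succ k ih =>
    have lie_pow_mul (z : A) : ⁅x, ⁅x, y⁆ ^ k * z⁆ = ⁅x, y⁆ ^ k * ⁅x, z⁆ := by
      rw [Ring.lie_def x (_ * z), Ring.lie_def x z, mul_sub, ← mul_assoc, ← mul_assoc, ← mul_assoc,
        (hx.pow_left k).eq]
    rw [pow_succ', Module.End.mul_apply, ih, map_nsmul, LieAlgebra.ad_apply, lie_pow_mul,
      lie_pow_of_commute hy, mul_smul_comm, smul_smul, Nat.descFactorial_succ, Nat.sub_sub,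
      pow_succ, mul_assoc, mul_comm (b - k)]

theorem pow_mul_pow_eq_sum_of_mul_eq_mul_add {x y c : A} (h : x * y = y * x + c)
    (hx : Commute c x) (hy : Commute c y) (a b : ℕ) :
    x ^ a * y ^ b = ∑ k ∈ Finset.range (min a b + 1),
      (a.choose k * b.descFactorial k) • (c ^ k * y ^ (b - k) * x ^ (a - k)) := by
  obtain rfl : ⁅x, y⁆ = c := by rw [Ring.lie_def, h, add_sub_cancel_left]
  have hterm (k : ℕ) : a.choose k • ((LieAlgebra.ad ℤ A x ^ k) (y ^ b) * x ^ (a - k)) =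
      (a.choose k * b.descFactorial k) • (⁅x, y⁆ ^ k * y ^ (b - k) * x ^ (a - k)) := by
    rw [ad_pow_apply_pow ℤ hx hy, smul_mul_assoc, smul_smul]
  rw [pow_mul_eq_sum_ad_pow_mul ℤ, Finset.sum_congr rfl fun k _ => hterm k]
  refine (Finset.sum_subset (by gcongr; exact min_le_left a b) fun k hka hkab => ?_).symm
  have hbk : b < k := by simp only [Finset.mem_range] at hka hkab; omega
  rw [Nat.descFactorial_of_lt hbk, mul_zero, zero_smul]

end Ring

theorem lie_tmul_tmul_of_commute {R A B : Type*} [CommRing R] [Ring A] [Ring B] [Algebra R A]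
    [Algebra R B] {a a' : A} (h : Commute a a') (b b' : B) :
    ⁅a ⊗ₜ[R] b, a' ⊗ₜ[R] b'⁆ = (a * a') ⊗ₜ[R] ⁅b, b'⁆ := by
  simp only [Ring.lie_def, Algebra.TensorProduct.tmul_mul_tmul, tmul_sub, h.eq]

theorem lie_sum_tmul_sum_tmul_of_lie_eq_ite {ι R A B : Type*} [Fintype ι] [DecidableEq ι]
    [CommRing R] [Ring A] [Ring B] [Algebra R A] [Algebra R B] {a a' : ι → A} {b b' : ι → B}
    (ha : ∀ i j, Commute (a i) (a' j)) (hb : ∀ i j, ⁅b i, b' j⁆ = if i = j then 1 else 0) :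
    ⁅∑ i, a i ⊗ₜ[R] b i, ∑ j, a' j ⊗ₜ[R] b' j⁆ = ∑ i, (a i * a' i) ⊗ₜ[R] 1 := by
  simp only [sum_lie_sum, lie_tmul_tmul_of_commute (ha _ _), hb, tmul_ite,
    Finset.sum_ite_eq, Finset.mem_univ, if_true]

theorem lie_derivation_mulLeft {R A : Type*} [CommRing R] [CommRing A] [Algebra R A]
    (D : Derivation R A A) (a : A) :
    ⁅(D : Module.End R A), LinearMap.mulLeft R a⁆ = LinearMap.mulLeft R (D a) := by
  ext p
  simp [Ring.lie_def, mul_comm p]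

theorem lie_pderiv_mulLeft_X {R σ : Type*} [CommRing R] [DecidableEq σ] (s t : σ) :
    ⁅(pderiv (R := R) s).toLinearMap, LinearMap.mulLeft R (X t : MvPolynomial σ R)⁆ =
      if s = t then 1 else 0 := by
  rw [lie_derivation_mulLeft, pderiv_X]
  obtain rfl | h := eq_or_ne s t
  · simp [Module.End.one_eq_id]
  · simp [h, h.symm]

end Commutators

section ExteriorAlgebra

variable {R M : Type*} [CommRing R] [AddCommGroup M] [Module R M]

theorem ι_mul_ι_eq_neg_swap (u v : M) :
    ExteriorAlgebra.ι R u * ExteriorAlgebra.ι R v =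
      -(ExteriorAlgebra.ι R v * ExteriorAlgebra.ι R u) :=
  eq_neg_of_add_eq_zero_left (ExteriorAlgebra.ι_add_mul_swap u v)

theorem ι_mul_ι_mem_center (u v : M) :
    ExteriorAlgebra.ι R u * ExteriorAlgebra.ι R v ∈
      Subalgebra.center R (ExteriorAlgebra R M) := by
  rw [Subalgebra.mem_center_iff]
  intro x
  induction x using ExteriorAlgebra.induction with
  | algebraMap r => exact Algebra.commutes r _
  | ι w =>
    rw [← mul_assoc, ι_mul_ι_eq_neg_swap w u, neg_mul, mul_assoc, ι_mul_ι_eq_neg_swap w v,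
      mul_neg, neg_neg, mul_assoc]
  | mul x y hx hy => rw [mul_assoc, hy, ← mul_assoc, hx, mul_assoc]
  | add x y hx hy => rw [add_mul, mul_add, hx, hy]

theorem commute_ι_mul_ι (u v : M) (x : ExteriorAlgebra R M) :
    Commute (ExteriorAlgebra.ι R u * ExteriorAlgebra.ι R v) x :=
  (Subalgebra.mem_center_iff.mp (ι_mul_ι_mem_center u v) x).symm

end ExteriorAlgebra

theorem sum_sum_eq_two_nsmul_sum_lt {ι M : Type*} [LinearOrder ι] [Fintype ι] [AddCommMonoid M]
    (f : ι → ι → M) (hsymm : ∀ i j, f i j = f j i) (hdiag : ∀ i, f i i = 0) :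
    ∑ i, ∑ j, f i j = 2 • ∑ p : {p : ι × ι // p.1 < p.2}, f p.1.1 p.1.2 := by
  have hsplit (i j : ι) :
      f i j = (if i < j then f i j else 0) + if j < i then f j i else 0 := by
    rcases lt_trichotomy i j with h | rfl | h
    · simp [h, h.not_gt]
    · simp [hdiag]
    · simp [h, h.not_gt, hsymm i j]
  have hsubtype : ∑ i, ∑ j, (if i < j then f i j else 0) =
      ∑ p : {p : ι × ι // p.1 < p.2}, f p.1.1 p.1.2 := by
    rw [← Fintype.sum_prod_type', ← Finset.sum_filter]
    exact Finset.sum_subtype _ (by simp) _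
  calc ∑ i, ∑ j, f i j
      = ∑ i, ∑ j, (if i < j then f i j else 0) + ∑ i, ∑ j, if j < i then f j i else 0 := by
        simp only [← Finset.sum_add_distrib, ← hsplit]
    _ = _ := by rw [Finset.sum_comm (f := fun i j => if j < i then f j i else 0), hsubtype,
        two_nsmul]

theorem Mop_swap (n : ℕ) (i j : Fin n) : Mop n j i = -Mop n i j := by
  rcases lt_trichotomy i j with h | rfl | h <;> simp [Mop, *, not_lt_of_gt]

theorem Dop_swap (n : ℕ) (i j : Fin n) : Dop n j i = -Dop n i j := by
  rcases lt_trichotomy i j with h | rfl | h <;> simp [Dop, *, not_lt_of_gt]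

theorem Mop_coe {n : ℕ} (p : Idx n) : Mop n p.1.1 p.1.2 = LinearMap.mulLeft ℂ (X p) :=
  dif_pos p.2

theorem Dop_coe {n : ℕ} (p : Idx n) : Dop n p.1.1 p.1.2 = (pderiv (R := ℂ) p).toLinearMap :=
  dif_pos p.2

theorem e_mul_e_swap (n : ℕ) (u v : Fin n ⊕ Fin n) : e n u * e n v = -(e n v * e n u) :=
  ι_mul_ι_eq_neg_swap _ _

theorem e_mul_self (n : ℕ) (v : Fin n ⊕ Fin n) : e n v * e n v = 0 :=
  ExteriorAlgebra.ι_sq_zero _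

theorem commute_e_mul_e (n : ℕ) (u v : Fin n ⊕ Fin n) (x : ExteriorAlgebra ℂ (V n)) :
    Commute (e n u * e n v) x :=
  commute_ι_mul_ι _ _ x

theorem e_mul_e_mul_e_mul_e_pairing (n : ℕ) (i j i' j' : Fin n ⊕ Fin n) :
    (e n j' * e n i') * (e n i * e n j) = (e n i * e n i') * (e n j * e n j') :=
  calc (e n j' * e n i') * (e n i * e n j)
      = e n j' * (e n i' * e n i) * e n j := by simp only [mul_assoc]
    _ = (e n i' * e n i) * (e n j' * e n j) := by
      rw [← (commute_e_mul_e n i' i (e n j')).eq, mul_assoc]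
    _ = (e n i * e n i') * (e n j * e n j') := by
      rw [e_mul_e_swap n i' i, e_mul_e_swap n j' j, neg_mul_neg]

theorem ThetaMinus_eq_two_nsmul_sum (n : ℕ) :
    ThetaMinus n = 2 • ∑ p : Idx n,
      (e n (.inl p.1.1) * e n (.inl p.1.2)) ⊗ₜ[ℂ] LinearMap.mulLeft ℂ (X p : P n) := by
  simp only [← Mop_coe]
  refine sum_sum_eq_two_nsmul_sum_lt
    (fun i j => (e n (.inl i) * e n (.inl j)) ⊗ₜ[ℂ] Mop n i j) (fun i j => ?_) fun i => ?_
  · rw [e_mul_e_swap, Mop_swap, neg_tmul, tmul_neg, neg_neg]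
  · rw [e_mul_self, zero_tmul]

theorem ThetaPlus_eq_two_nsmul_sum (n : ℕ) :
    ThetaPlus n = 2 • ∑ p : Idx n,
      (e n (.inr p.1.2) * e n (.inr p.1.1)) ⊗ₜ[ℂ] (pderiv (R := ℂ) p).toLinearMap := by
  simp only [← Dop_coe]
  refine sum_sum_eq_two_nsmul_sum_lt
    (fun i j => (e n (.inr j) * e n (.inr i)) ⊗ₜ[ℂ] Dop n i j) (fun i j => ?_) fun i => ?_
  · rw [e_mul_e_swap, Dop_swap, neg_tmul, tmul_neg, neg_neg]
  · rw [e_mul_self, zero_tmul]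

theorem tau_sq_eq_two_nsmul_sum (n : ℕ) :
    tau n ^ 2 = 2 • ∑ p : Idx n, ((e n (.inl p.1.1) * e n (.inr p.1.1)) *
      (e n (.inl p.1.2) * e n (.inr p.1.2))) ⊗ₜ[ℂ] 1 := by
  simp only [tau, pow_two, Finset.sum_mul_sum, Algebra.TensorProduct.tmul_mul_tmul, mul_one]
  refine sum_sum_eq_two_nsmul_sum_lt (fun i j => ((e n (.inl i) * e n (.inr i)) *
    (e n (.inl j) * e n (.inr j))) ⊗ₜ[ℂ] 1) (fun i j => ?_) fun i => ?_
  · rw [(commute_e_mul_e n _ _ _).eq]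
  · rw [← e_mul_e_mul_e_mul_e_pairing, e_mul_self, zero_mul, zero_tmul]

theorem tau_mem_center (n : ℕ) : tau n ∈ Subalgebra.center ℂ (ExtEnd n) :=
  sum_mem fun _ _ => Algebra.TensorProduct.includeLeft_map_center_le ℂ _ _
    ⟨_, ι_mul_ι_mem_center _ _, rfl⟩

theorem commute_two_mul_tau_sq (n : ℕ) (z : ExtEnd n) : Commute (2 * tau n ^ 2) z :=
  have hmem : 2 * tau n ^ 2 ∈ Subalgebra.center ℂ (ExtEnd n) :=
    mul_mem (ofNat_mem _ 2) (pow_mem (tau_mem_center n) 2)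
  (Subalgebra.mem_center_iff.mp hmem z).symm

attribute [local instance] LieRing.ofAssociativeRing in
theorem lie_ThetaPlus_ThetaMinus (n : ℕ) : ⁅ThetaPlus n, ThetaMinus n⁆ = 2 * tau n ^ 2 := by
  have hlie := lie_sum_tmul_sum_tmul_of_lie_eq_ite (R := ℂ)
    (a := fun p : Idx n => e n (.inr p.1.2) * e n (.inr p.1.1))
    (a' := fun q => e n (.inl q.1.1) * e n (.inl q.1.2))
    (fun p q => commute_e_mul_e n _ _ _) (lie_pderiv_mulLeft_X (R := ℂ))
  simp only [e_mul_e_mul_e_mul_e_pairing] at hlie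
  rw [ThetaPlus_eq_two_nsmul_sum, ThetaMinus_eq_two_nsmul_sum, tau_sq_eq_two_nsmul_sum, ← hlie]
  rw [two_mul, ← two_nsmul]
  exact (nsmul_lie (L := ExtEnd n) _ _ 2).trans <|
    congrArg (fun z : ExtEnd n => 2 • z) (lie_nsmul (L := ExtEnd n) _ _ 2)

theorem dfac_eq_descFactorial (a k : ℕ) : dfac a k = a.descFactorial k := by
  rw [dfac, ← descPochhammer_eval_eq_prod_range, descPochhammer_eval_eq_descFactorial]

theorem dfac_mul_dfac_div_factorial (a b k : ℕ) :
    dfac a k * dfac b k / (k.factorial : ℂ) = (a.choose k * b.descFactorial k : ℕ) := by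
  have hk : (k.factorial : ℂ) ≠ 0 := Nat.cast_ne_zero.mpr k.factorial_ne_zero
  rw [dfac_eq_descFactorial, dfac_eq_descFactorial, Nat.descFactorial_eq_factorial_mul_choose a k]
  push_cast
  field_simp

/-- `Θ₊^a Θ₋^b = Σ_{k=0}^{min(a,b)} ((a)_k (b)_k / k!) (2τ²)^k Θ₋^{b−k} Θ₊^{a−k}`. -/
theorem ThetaPlus_pow_mul_ThetaMinus_pow (n : ℕ) (hn : 1 ≤ n) (a b : ℕ) :
    ThetaPlus n ^ a * ThetaMinus n ^ b =
      ∑ k ∈ Finset.range (min a b + 1),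
        ((dfac a k * dfac b k) / (k.factorial : ℂ)) •
          ((2 * tau n ^ 2) ^ k * ThetaMinus n ^ (b - k) * ThetaPlus n ^ (a - k)) := by
  have hrel : ThetaPlus n * ThetaMinus n = ThetaMinus n * ThetaPlus n + 2 * tau n ^ 2 :=
    sub_eq_iff_eq_add'.mp (lie_ThetaPlus_ThetaMinus n)
  refine (pow_mul_pow_eq_sum_of_mul_eq_mul_add (A := ExtEnd n) hrel (commute_two_mul_tau_sq n _)
    (commute_two_mul_tau_sq n _) a b).trans (Finset.sum_congr rfl fun k _ => ?_)
  rw [dfac_mul_dfac_div_factorial, Nat.cast_smul_eq_nsmul]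

end
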